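/- arXiv:2502.08989 — 6 statements merged into one kernel-verified Lean document; each statement's English description precedes it below -/
import Mathlib

section
/- Correctness of the aggregation protocol with arbitrary participant sets (dropout tolerance): let q be a prime, n ≥ 1 with (n : ZMod q) ≠ 0, and d ≥ 1. Let I be a finite set of participating users, let x : I → (Fin d → ZMod q) assign to each user its local model vector, and let k : I → ZMod n → (Fin d → ZMod q) assign to each user an independent family of mask vectors. Define the masked share of user i for receiver j componentwise by c i j = (fun a => (x i a) · (n : ZMod q)⁻¹ + k i j a − k i (j − 1) a). Then the aggregator's output, obtained by summing the partial aggregates of all receivers, equals the sum of the participants' models: ∑_{j ∈ ZMod n} ∑_{i ∈ I} c i j = ∑_{i ∈ I} x i (as functions Fin d → ZMod q). -/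
/-- Correctness of aggregation with an arbitrary finite participant set `I`
(dropout tolerance): summing all receivers' partial aggregates of the masked
shares recovers the sum of the participants' model vectors. -/
theorem aggregation_correctness (q n d : ℕ) [Fact (Nat.Prime q)] [NeZero n]
    (hd : 1 ≤ d) (hn : (n : ZMod q) ≠ 0)
    (I : Type) [Fintype I]
    (x : I → Fin d → ZMod q)
    (k : I → ZMod n → Fin d → ZMod q) :
    (∑ j : ZMod n, ∑ i : I,
        (fun a : Fin d => x i a * (n : ZMod q)⁻¹ + k i j a - k i (j - 1) a))
      = ∑ i : I, x i := by
  rw [Finset.sum_comm]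
  refine Finset.sum_congr rfl fun i _ => ?_
  funext a
  rw [Finset.sum_apply, Finset.sum_sub_distrib, Finset.sum_add_distrib]
  have h : ∑ j : ZMod n, k i (j - 1) a = ∑ j : ZMod n, k i j a :=
    (Equiv.subRight (1 : ZMod n)).sum_comp (fun j => k i j a)
  rw [h, add_sub_cancel_right, Finset.sum_const, Finset.card_univ, ZMod.card, nsmul_eq_mul]
  field_simp
end

section
/- Privacy for two honest users: let q be a positive integer and let a, b, a', b' ∈ ZMod q satisfy a + b = a' + b'. Then the pushforward of the uniform distribution on ZMod q under r ↦ (a + r, b − r) equals the pushforward of the uniform distribution on ZMod q under r ↦ (a' + r, b' − r). That is, the joint distribution of the two oppositely masked values depends only on the sum a + b. -/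
/-- Privacy for two honest users: if `a + b = a' + b'` in `ZMod q`, then the
joint distribution of `(a + r, b - r)` for uniformly random `r : ZMod q`
equals that of `(a' + r, b' - r)`; it depends only on the sum `a + b`. -/
theorem two_honest_users_privacy (q : ℕ) [NeZero q]
    (a b a' b' : ZMod q) (h : a + b = a' + b') :
    PMF.map (fun r : ZMod q => (a + r, b - r)) (PMF.uniformOfFintype (ZMod q))
      = PMF.map (fun r : ZMod q => (a' + r, b' - r))
          (PMF.uniformOfFintype (ZMod q)) := by
  ext z
  rw [PMF.map_apply, PMF.map_apply, ← (Equiv.addRight (a' - a)).tsum_eq]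
  refine tsum_congr fun r => ?_
  have h1 : a + (r + (a' - a)) = a' + r := by ring
  have h2 : b - (r + (a' - a)) = b' - r := by linear_combination h
  simp only [Equiv.coe_addRight, h1, h2, PMF.uniformOfFintype_apply]
end

section
/- Uniformity of the key-negation mask tuple: let q be a positive integer and n ≥ 1. The pushforward of the uniform distribution on the key families (ZMod n → ZMod q) under the map k ↦ (fun j => k j − k (j − 1)), viewed as taking values in the subtype {v : ZMod n → ZMod q // ∑_{j} v j = 0}, is the uniform distribution on that subtype. -/
/-- The range of the cyclic difference map consists of zero-sum families. -/
theorem cyclic_difference_zero_sum (q n : ℕ) [NeZero q] [NeZero n]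
    (k : ZMod n → ZMod q) :
    ∑ j : ZMod n, (k j - k (j - 1)) = 0 := by
  rw [Finset.sum_sub_distrib, sub_eq_zero]
  exact (Fintype.sum_equiv (Equiv.subRight (1 : ZMod n))
    (fun j => k (j - 1)) k (fun j => rfl)).symm

instance zeroSumFamilies_nonempty (q n : ℕ) [NeZero q] [NeZero n] :
    Nonempty {v : ZMod n → ZMod q // ∑ j : ZMod n, v j = 0} :=
  ⟨⟨0, by simp⟩⟩

theorem pmf_eq_uniform_of_const {β : Type*} [Fintype β] [Nonempty β] (p : PMF β)
    (h : ∀ a b, p a = p b) : p = PMF.uniformOfFintype β := by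
  ext a
  rw [PMF.uniformOfFintype_apply]
  have h1 := p.tsum_coe
  rw [tsum_fintype, Finset.sum_congr rfl (fun b _ => h b a)] at h1
  simp only [Finset.sum_const, Finset.card_univ, nsmul_eq_mul] at h1
  exact ENNReal.eq_inv_of_mul_eq_one_left (by rw [mul_comm]; exact h1)

theorem zmod_sum_range (q n : ℕ) [NeZero n] (v : ZMod n → ZMod q) :
    ∑ i ∈ Finset.range n, v (i : ZMod n) = ∑ j : ZMod n, v j := by
  refine Finset.sum_nbij' (fun i => (i : ZMod n)) (fun j => j.val) ?_ ?_ ?_ ?_ ?_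
  · intro i _; simp
  · intro j _; simpa using ZMod.val_lt j
  · intro i hi; exact ZMod.val_cast_of_lt (by simpa using hi)
  · intro j _; simp
  · intro i _; rfl

theorem cyclic_difference_surj (q n : ℕ) [NeZero n] (v : ZMod n → ZMod q)
    (hv : ∑ j : ZMod n, v j = 0) :
    ∃ k : ZMod n → ZMod q, ∀ j, k j - k (j - 1) = v j := by
  refine ⟨fun j => ∑ i ∈ Finset.range (j.val + 1), v (i : ZMod n), fun j => ?_⟩
  obtain ⟨m, hm⟩ : ∃ m, m = (j - 1).val := ⟨_, rfl⟩
  have hlt : m < n := hm ▸ ZMod.val_lt _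
  have hj : j = ((m + 1 : ℕ) : ZMod n) := by
    rw [Nat.cast_add, hm, ZMod.natCast_zmod_val]; simp
  simp only [← hm]
  rcases Nat.lt_or_ge (m + 1) n with h | h
  · have : j.val = m + 1 := by rw [hj]; exact ZMod.val_cast_of_lt h
    rw [this, Finset.sum_range_succ _ (m + 1), ← hj]; ring
  · have hmn : m + 1 = n := by omega
    have hj0 : j = 0 := by rw [hj, hmn]; simp
    rw [hmn, zmod_sum_range, hv, hj0]; simp

/-- Uniformity of the key-negation mask tuple: the pushforward of the uniform
distribution on key families `ZMod n → ZMod q` under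
`k ↦ (fun j => k j - k (j - 1))`, viewed in the subtype of zero-sum families,
is the uniform distribution on that subtype. -/
theorem key_negation_mask_uniform (q n : ℕ) [NeZero q] [NeZero n] :
    PMF.map (fun k : ZMod n → ZMod q =>
        (⟨fun j : ZMod n => k j - k (j - 1), cyclic_difference_zero_sum q n k⟩ :
          {v : ZMod n → ZMod q // ∑ j : ZMod n, v j = 0}))
      (PMF.uniformOfFintype (ZMod n → ZMod q))
    = PMF.uniformOfFintype {v : ZMod n → ZMod q // ∑ j : ZMod n, v j = 0} := by
  apply pmf_eq_uniform_of_const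
  rintro ⟨a, ha⟩ ⟨b, hb⟩
  obtain ⟨k, hk⟩ := cyclic_difference_surj q n (b - a) (by simp [ha, hb])
  rw [PMF.map_apply, PMF.map_apply]
  conv_rhs => rw [← (Equiv.addRight k).tsum_eq]
  refine tsum_congr fun x => ?_
  have : (a = fun j => x j - x (j - 1)) ↔
      (b = fun j => (x + k) j - (x + k) (j - 1)) := by
    simp only [funext_iff, Pi.add_apply]
    refine forall_congr' fun j => ?_
    have := hk j
    simp only [Pi.sub_apply] at this
    constructor <;> intro h
    · linear_combination h - this
    · linear_combination h + this
  simp only [PMF.uniformOfFintype_apply, Subtype.mk.injEq, Equiv.coe_addRight]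
  simp only [this]
end

section
/- Proper-subset fiber counting (collusion resistance of the mask structure): let q be a positive integer, n ≥ 1, and let S be a subset of ZMod n with S ≠ ZMod n (i.e., at least one receiver is missing from S). Then for every target family v : ZMod n → ZMod q, the number of key families k : ZMod n → ZMod q satisfying k j − k (j − 1) = v j for all j ∈ S is exactly q^(n − |S|). In particular this count does not depend on v, so the restriction of the difference map to the coordinates in S maps the uniform distribution on key families to the uniform distribution on (all of) the S-indexed tuples. -/
open Classical in
noncomputable def auxPhi (q n : ℕ) (S : Finset (ZMod n)) (k : ZMod n → ZMod q) : ZMod n → ZMod q :=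
  fun j => if j ∈ S then k j - k (j - 1) else k j

theorem auxPhi_bij (q n : ℕ) [NeZero q] [NeZero n]
    (S : Finset (ZMod n)) (hS : S ≠ Finset.univ) : Function.Bijective (auxPhi q n S) := by
  rw [← Finite.injective_iff_bijective]
  intro k k' h
  obtain ⟨m, hm⟩ : ∃ m, m ∉ S := by
    by_contra hc
    push Not at hc
    exact hS (Finset.eq_univ_iff_forall.2 hc)
  have key : ∀ i : ℕ, k (m + i) = k' (m + i) := by
    intro i
    induction i with
    | zero => simpa [auxPhi, hm] using congrFun h m
    | succ i ih =>
      have h1 := congrFun h (m + ((i + 1 : ℕ) : ZMod n))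
      have h2 : m + ((i + 1 : ℕ) : ZMod n) - 1 = m + i := by push_cast; ring
      simp only [auxPhi, h2, ih] at h1
      split_ifs at h1
      · exact sub_left_injective h1
      · exact h1
  funext j
  have := key (j - m).val
  rwa [ZMod.natCast_zmod_val, add_sub_cancel] at this

open Classical in
theorem aux_card (q n : ℕ) [NeZero q] [NeZero n]
    (S : Finset (ZMod n)) (hS : S ≠ Finset.univ) (v : ZMod n → ZMod q) :
    Fintype.card {k : ZMod n → ZMod q // ∀ j ∈ S, k j - k (j - 1) = v j}
        = q ^ (n - S.card) := by
  let e := Equiv.ofBijective _ (auxPhi_bij q n S hS)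
  have e1 : {k : ZMod n → ZMod q // ∀ j ∈ S, k j - k (j - 1) = v j} ≃
      {w : ZMod n → ZMod q // ∀ j ∈ S, w j = v j} :=
    e.subtypeEquiv (fun k => by
      refine forall₂_congr fun j hj => ?_
      simp [e, auxPhi, hj])
  have e2 : {w : ZMod n → ZMod q // ∀ j ∈ S, w j = v j} ≃ ({j // j ∉ S} → ZMod q) :=
    { toFun := fun w j => w.1 j.1
      invFun := fun u => ⟨fun j => if h : j ∈ S then v j else u ⟨j, h⟩, fun j hj => by simp [hj]⟩
      left_inv := fun w => by
        ext j
        by_cases hj : j ∈ S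
        · simp [hj, w.2 j hj]
        · simp [hj]
      right_inv := fun u => by
        ext ⟨j, hj⟩
        simp [hj] }
  rw [Fintype.card_congr (e1.trans e2), Fintype.card_fun, ZMod.card, Fintype.card_subtype_compl,
    ZMod.card, Fintype.card_coe]

/-- Proper-subset fiber counting (collusion resistance of the mask structure):
for `S` a proper subset of the receivers `ZMod n` and any target family `v`,
exactly `q ^ (n - |S|)` key families `k` satisfy `k j - k (j - 1) = v j` for
all `j ∈ S`. In particular the count is independent of `v`, so the restriction
of the difference map to the coordinates in `S` pushes the uniform
distribution on key families to the uniform distribution on `S`-tuples. -/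
theorem proper_subset_fiber_card (q n : ℕ) [NeZero q] [NeZero n]
    (S : Finset (ZMod n)) (hS : S ≠ Finset.univ) (v : ZMod n → ZMod q) :
    Fintype.card {k : ZMod n → ZMod q // ∀ j ∈ S, k j - k (j - 1) = v j}
        = q ^ (n - S.card) ∧
    PMF.map (fun (k : ZMod n → ZMod q) (j : S) => k j.val - k (j.val - 1))
        (PMF.uniformOfFintype (ZMod n → ZMod q))
      = PMF.uniformOfFintype (S → ZMod q) := by
  classical
  refine ⟨?_, ?_⟩
  · rw [← aux_card q n S hS v]
  · ext w
    have hc := aux_card q n S hS (fun j => if h : j ∈ S then w ⟨j, h⟩ else 0)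
    have hle : S.card ≤ n := by simpa [ZMod.card] using S.card_le_univ
    have hq : (q : ENNReal) ≠ 0 := by exact_mod_cast NeZero.ne q
    rw [PMF.map_apply, tsum_fintype, PMF.uniformOfFintype_apply]
    simp only [PMF.uniformOfFintype_apply]
    rw [← Finset.sum_filter, Finset.sum_const, nsmul_eq_mul]
    have hcc : (Finset.univ.filter (fun k : ZMod n → ZMod q =>
        w = fun j : S => k j.val - k (j.val - 1))).card = q ^ (n - S.card) := by
      rw [← hc, Fintype.card_subtype]
      congr 1
      ext k
      simp only [Finset.mem_filter, Finset.mem_univ, true_and]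
      constructor
      · rintro rfl j hj
        simp [hj]
      · intro h
        funext j
        have := h j.1 j.2
        simp at this
        exact this.symm
    rw [hcc]
    simp only [Fintype.card_fun, ZMod.card, Fintype.card_coe]
    push_cast
    have h3 : (q : ENNReal) ^ n = q ^ (n - S.card) * q ^ S.card := by
      rw [← pow_add, Nat.sub_add_cancel hle]
    have ha : (q : ENNReal) ^ (n - S.card) ≠ 0 := pow_ne_zero _ hq
    have hb : (q : ENNReal) ^ (n - S.card) ≠ ⊤ := ENNReal.pow_ne_top (ENNReal.natCast_ne_top q)
    rw [h3, ENNReal.mul_inv (Or.inl ha) (Or.inl hb), ← mul_assoc, ENNReal.mul_inv_cancel ha hb,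
      one_mul]
end

section
/- View of any proper subset of receivers is independent of the secret: let q be a prime, n ≥ 1 with (n : ZMod q) ≠ 0, and let S be a subset of ZMod n with S ≠ ZMod n. For any two local models x, x' ∈ ZMod q, the pushforward of the uniform distribution on key families (ZMod n → ZMod q) under the map k ↦ (fun j : S => x · (n : ZMod q)⁻¹ + k j − k (j − 1)) equals the pushforward under k ↦ (fun j : S => x' · (n : ZMod q)⁻¹ + k j − k (j − 1)). That is, the joint distribution of the masked shares received by the receivers in S is identical for all values of the user's local model. -/
theorem val_pred_aux (n : ℕ) [NeZero n] (a : ZMod n) (ha : a ≠ 0) :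
    a.val = (a - 1).val + 1 := by
  have h0 : a.val ≠ 0 := fun h => ha ((ZMod.val_eq_zero a).1 h)
  have h1 : a.val < n := ZMod.val_lt a
  have h2 : a - 1 = ((a.val - 1 : ℕ) : ZMod n) := by
    rw [Nat.cast_sub (by omega), ZMod.natCast_zmod_val, Nat.cast_one]
  rw [h2, ZMod.val_natCast_of_lt (by omega)]
  omega

theorem map_shift_aux {α : Type*} [Fintype α] [AddCommGroup α] (d : α) :
    PMF.map (fun k => k + d) (PMF.uniformOfFintype α) = PMF.uniformOfFintype α := by
  classical
  ext a
  rw [PMF.map_apply, tsum_eq_single (a - d)]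
  · simp
  · intro b hb
    rw [if_neg]
    rintro rfl
    simp at hb

/-- The view of any proper subset `S` of receivers is independent of the
secret: for `q` prime, `n ≥ 1` with `(n : ZMod q) ≠ 0`, and any two local
models `x, x'`, the joint distribution of the masked shares
`(x * (n : ZMod q)⁻¹ + k j - k (j - 1))_{j ∈ S}`, over a uniformly random key
family `k`, is the same for `x` and for `x'`. -/
theorem proper_subset_view_independent (q n : ℕ) [Fact (Nat.Prime q)]
    [NeZero n] (hn : (n : ZMod q) ≠ 0)
    (S : Finset (ZMod n)) (hS : S ≠ Finset.univ) (x x' : ZMod q) :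
    PMF.map (fun (k : ZMod n → ZMod q) (j : S) =>
        x * (n : ZMod q)⁻¹ + k j.val - k (j.val - 1))
      (PMF.uniformOfFintype (ZMod n → ZMod q))
    = PMF.map (fun (k : ZMod n → ZMod q) (j : S) =>
        x' * (n : ZMod q)⁻¹ + k j.val - k (j.val - 1))
      (PMF.uniformOfFintype (ZMod n → ZMod q)) := by
  obtain ⟨m, hm⟩ : ∃ m, m ∉ S := by
    by_contra! h
    exact hS (Finset.eq_univ_iff_forall.2 h)
  let d : ZMod n → ZMod q := fun j =>
    (x * (n : ZMod q)⁻¹ - x' * (n : ZMod q)⁻¹) * ((j - m).val : ZMod q)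
  conv_rhs => rw [← map_shift_aux d, PMF.map_comp]
  congr 1
  funext k j
  have hj : j.val - m ≠ 0 := by
    intro h
    exact hm (sub_eq_zero.1 h ▸ j.2)
  have h1 := val_pred_aux n _ hj
  have h2 : j.val - 1 - m = j.val - m - 1 := by ring
  simp only [Function.comp, Pi.add_apply, d]
  rw [h2, h1]
  push_cast
  ring
end

section
/- The masked vector's distribution depends only on the aggregate (hybrid Hyb₄ claim): let q be a positive integer, m ≥ 1, and let x, y : Fin m → ZMod q satisfy ∑_{i} x i = ∑_{i} y i. Let μ be the uniform distribution on the subtype {r : Fin m → ZMod q // ∑_{i} r i = 0} of zero-sum mask vectors. Then the pushforward of μ under r ↦ (fun i => x i + r.val i) equals the pushforward of μ under r ↦ (fun i => y i + r.val i). -/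
instance zeroSumVectors_nonempty (q m : ℕ) [NeZero q] :
    Nonempty {r : Fin m → ZMod q // ∑ i, r i = 0} :=
  ⟨⟨0, by simp⟩⟩

/-- The masked vector's distribution depends only on the aggregate: if
`∑ i, x i = ∑ i, y i`, then masking `x` and masking `y` with a uniformly
random zero-sum mask vector `r` yields identically distributed views. -/
theorem masked_view_depends_only_on_sum (q m : ℕ) [NeZero q] [NeZero m]
    (x y : Fin m → ZMod q) (h : ∑ i, x i = ∑ i, y i) :
    PMF.map (fun (r : {r : Fin m → ZMod q // ∑ i, r i = 0}) (i : Fin m) =>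
        x i + r.val i)
      (PMF.uniformOfFintype {r : Fin m → ZMod q // ∑ i, r i = 0})
    = PMF.map (fun (r : {r : Fin m → ZMod q // ∑ i, r i = 0}) (i : Fin m) =>
        y i + r.val i)
      (PMF.uniformOfFintype {r : Fin m → ZMod q // ∑ i, r i = 0}) := by
  classical
  let e : {r : Fin m → ZMod q // ∑ i, r i = 0} ≃ {r : Fin m → ZMod q // ∑ i, r i = 0} :=
    { toFun := fun r => ⟨fun i => x i + r.val i - y i, by
        rw [Finset.sum_sub_distrib, Finset.sum_add_distrib, r.2, h]; ring⟩
      invFun := fun r => ⟨fun i => y i + r.val i - x i, by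
        rw [Finset.sum_sub_distrib, Finset.sum_add_distrib, r.2, h]; ring⟩
      left_inv := fun r => by ext i; simp
      right_inv := fun r => by ext i; simp }
  ext v
  rw [PMF.map_apply, PMF.map_apply, ← e.symm.tsum_eq]
  refine tsum_congr fun r => ?_
  have he : (fun i => x i + (e.symm r).val i) = fun i => y i + r.val i := by
    funext i; simp [e]
  rw [he, PMF.uniformOfFintype_apply, PMF.uniformOfFintype_apply]
end
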